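/- arXiv:1402.6817 — 12 statements merged into one kernel-verified Lean document; each statement's English description precedes it below -/
import Mathlib

section
/- For every integer k ≥ 0, the sum over all integers p of binom(2k, k+p)·|p| equals k·binom(2k, k). (Here binom(m, j) is defined to be 0 when j < 0 or j > m, so the sum is effectively over −k ≤ p ≤ k.) -/
theorem binom_abs_sum_aux (k m : ℕ) (hm : m ≤ k) :
    ∑ p ∈ Finset.Icc (-(m : ℤ)) (m : ℤ),
      (((2 * k).choose ((k : ℤ) + p).toNat : ℤ) * |p|) =
    (k : ℤ) * ((2 * k).choose k : ℤ) - ((k : ℤ) - m) * ((2 * k).choose (k + m) : ℤ) := by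
  induction m with
  | zero => simp
  | succ m ih =>
    have ih := ih (by omega)
    have e : Finset.Icc (-((m + 1 : ℕ) : ℤ)) ((m + 1 : ℕ) : ℤ) =
        insert ((m : ℤ) + 1) (insert (-((m : ℤ) + 1)) (Finset.Icc (-(m : ℤ)) (m : ℤ))) := by
      ext x
      simp only [Finset.mem_Icc, Finset.mem_insert]
      push_cast
      omega
    rw [e, Finset.sum_insert, Finset.sum_insert, ih]
    · have h1 : ((k : ℤ) + ((m : ℤ) + 1)).toNat = k + m + 1 := by omega
      have h2 : ((k : ℤ) + -((m : ℤ) + 1)).toNat = k - (m + 1) := by omega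
      have h3 : (2 * k).choose (k - (m + 1)) = (2 * k).choose (k + m + 1) :=
        Nat.choose_symm_of_eq_add (by omega)
      have h4 := Nat.choose_succ_right_eq (2 * k) (k + m)
      have h5 : ((2 * k - (k + m) : ℕ) : ℤ) = (k : ℤ) - m := by omega
      have h6 : ((2 * k).choose (k + m + 1) : ℤ) * ((k : ℤ) + m + 1)
          = ((2 * k).choose (k + m) : ℤ) * ((k : ℤ) - m) := by
        rw [← h5]; exact_mod_cast h4
      have h7 : |(m : ℤ) + 1| = m + 1 := abs_of_nonneg (by omega)
      rw [h1, h2, h3, abs_neg, h7, ← add_assoc k m 1]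
      push_cast
      linarith
    · simp only [Finset.mem_Icc]; omega
    · simp only [Finset.mem_Icc, Finset.mem_insert]; omega

/-- **Lemma (Best et al).** For every integer `k ≥ 0`,
`∑_p binom(2k, k+p) * |p| = k * binom(2k, k)`, where the sum is over all
integers `p` (effectively `-k ≤ p ≤ k`, since `binom(m, j) = 0` for `j < 0`
or `j > m`). -/
theorem binom_abs_sum (k : ℕ) :
    ∑ p ∈ Finset.Icc (-(k : ℤ)) (k : ℤ),
      (((2 * k).choose ((k : ℤ) + p).toNat : ℤ) * |p|) =
    (k : ℤ) * ((2 * k).choose k : ℤ) := by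
  rw [binom_abs_sum_aux k k le_rfl]
  simp
end

section
/- For every integer k ≥ 0, the double sum over all integers p and q of binom(2k, k+p)·binom(2k, k+q)·|p² − q²| equals 2k²·binom(2k, k)². -/
def bb (m : ℕ) (p : ℤ) : ℤ :=
  if (m : ℤ) + p < 0 then 0 else ((2 * m).choose ((m : ℤ) + p).toNat : ℤ)

def ss (p q : ℤ) : ℤ :=
  if q.natAbs < p.natAbs then 1 else if p.natAbs < q.natAbs then -1 else 0

lemma bb_zero (m : ℕ) (p : ℤ) (h : p < -m ∨ (m : ℤ) < p) : bb m p = 0 := by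
  unfold bb
  split_ifs with h1
  · rfl
  · rw [Nat.choose_eq_zero_of_lt]
    · rfl
    · omega

lemma bb_nat (m : ℕ) (p : ℤ) (j : ℕ) (h : (m : ℤ) + p = j) : bb m p = ((2 * m).choose j : ℤ) := by
  unfold bb
  rw [if_neg (by omega), h]
  simp

lemma bb_rec (n : ℕ) (p : ℤ) : bb (n+1) p = bb n (p-1) + 2 * bb n p + bb n (p+1) := by
  rcases lt_or_ge ((n : ℤ) + 1 + p) 0 with h | h
  · rw [bb_zero, bb_zero, bb_zero, bb_zero] <;> first | rfl | (left; push_cast; omega)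
  · obtain ⟨j, hj⟩ := Int.eq_ofNat_of_zero_le h
    rw [bb_nat (n+1) p j (by push_cast; omega), bb_nat n (p+1) j (by omega)]
    rcases j with _ | _ | j
    · rw [bb_zero, bb_zero]
      · simp
      · left; push_cast at hj; omega
      · left; push_cast at hj; omega
    · rw [bb_zero n (p-1), bb_nat n p 0 (by push_cast at *; omega)]
      · simp; ring
      · left; push_cast at hj; omega
    · rw [bb_nat n (p-1) j (by push_cast at *; omega), bb_nat n p (j+1) (by push_cast at *; omega)]
      rw [show 2 * (n+1) = (2*n+1)+1 by ring]
      simp only [Nat.choose_succ_succ']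
      push_cast; ring

lemma bb_sq (n : ℕ) (p : ℤ) :
    (((n:ℤ)+1)^2 - p^2) * bb (n+1) p = 2 * (n+1) * (2*n+1) * bb n p := by
  rcases lt_or_ge ((n : ℤ) + p) 0 with h | h
  · rw [bb_zero n p (by left; omega)]
    rcases eq_or_ne p (-(n+1)) with h1 | h1
    · rw [h1]; ring
    · rw [bb_zero (n+1) p (by left; push_cast; omega)]; ring
  · obtain ⟨j, hj⟩ := Int.eq_ofNat_of_zero_le h
    rw [bb_nat (n+1) p (j+1) (by push_cast; omega), bb_nat n p j (by omega)]
    have e1 := Nat.add_one_mul_choose_eq (2*n+1) j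
    have e2 := Nat.choose_mul_succ_eq (2*n) j
    rw [show 2 * (n+1) = (2*n+1)+1 by ring]
    rcases le_or_gt j (2*n+1) with hle | hlt
    · zify [hle] at e1
      have e2' : ((2*n).choose j : ℤ) * (2*n+1) = ((2*n+1).choose j : ℤ) * (2*n+1-j) := by
        have : 2*n+1-j + j = 2*n+1 := by omega
        zify at e2 this
        rw [e2]; congr 1; zify [hle]
      have hp : p = j - n := by omega
      subst hp
      push_cast at *
      linear_combination -(2*n+1-j:ℤ) * e1 - 2*((n:ℤ)+1) * e2'
    · rw [Nat.choose_eq_zero_of_lt (by omega), Nat.choose_eq_zero_of_lt (by omega)]; simp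

lemma shift (k : ℕ) (h : ℤ → ℤ) (h1 : h (-k) = 0) (h2 : h (k+1) = 0) :
    ∑ p ∈ Finset.Icc (-(k : ℤ)) (k : ℤ), h (p+1) = ∑ p ∈ Finset.Icc (-(k : ℤ)) (k : ℤ), h p := by
  have : ∑ p ∈ Finset.Icc (-(k : ℤ)) (k : ℤ), h (p+1)
      = ∑ p ∈ Finset.Icc (-(k : ℤ)+1) (k+1 : ℤ), h p := by
    rw [← Finset.map_add_right_Icc, Finset.sum_map]; rfl
  rw [this, Finset.sum_subset (s₂ := Finset.Icc (-(k : ℤ)) (k+1 : ℤ)),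
    Finset.sum_subset (s₁ := Finset.Icc (-(k : ℤ)) (k : ℤ)) (s₂ := Finset.Icc (-(k : ℤ)) (k+1 : ℤ))]
  · intro x; simp only [Finset.mem_Icc]; omega
  · intro x hx hx'
    simp only [Finset.mem_Icc] at hx hx'
    rw [show x = k+1 by omega, h2]
  · intro x; simp only [Finset.mem_Icc]; omega
  · intro x hx hx'
    simp only [Finset.mem_Icc] at hx hx'
    rw [show x = -k by omega, h1]

lemma lap (n : ℕ) (f : ℤ → ℤ) :
    ∑ p ∈ Finset.Icc (-((n+1 : ℕ) : ℤ)) ((n+1 : ℕ) : ℤ), bb (n+1) p * f p =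
    ∑ p ∈ Finset.Icc (-((n+1 : ℕ) : ℤ)) ((n+1 : ℕ) : ℤ), bb n p * (f (p+1) + 2 * f p + f (p-1)) := by
  have e1 := shift (n+1) (fun p => bb n (p-1) * f p)
    (by beta_reduce; rw [bb_zero]; simp; left; push_cast; omega)
    (by beta_reduce; rw [bb_zero]; simp; right; push_cast; omega)
  have e2 := shift (n+1) (fun p => bb n p * f (p-1))
    (by beta_reduce; rw [bb_zero]; simp; left; push_cast; omega)
    (by beta_reduce; rw [bb_zero]; simp; right; push_cast; omega)
  simp only [add_sub_cancel_right] at e1 e2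
  simp only [bb_rec, mul_add, add_mul, Finset.sum_add_distrib]
  rw [← e1, e2]
  congr 2
  exact Finset.sum_congr rfl fun _ _ => by ring

lemma ss_abs (p q : ℤ) : |p^2 - q^2| = (p^2-q^2) * ss p q := by
  unfold ss
  split_ifs with h h'
  · rw [abs_of_pos]; ring
    have := Int.natAbs_lt_iff_sq_lt.1 h; omega
  · rw [abs_of_neg]; ring
    have := Int.natAbs_lt_iff_sq_lt.1 h'; omega
  · have := Int.natAbs_eq_iff_sq_eq.1 (show p.natAbs = q.natAbs by omega)
    rw [this]; simp

lemma ss_lap (p q : ℤ) : (ss (p+1) q + 2 * ss p q + ss (p-1) q) -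
    (ss p (q+1) + 2 * ss p q + ss p (q-1)) =
    (if p = 0 then (if q = 0 then 4 else 0) else 0) + (if p = 0 then (if q = 1 then 1 else 0) else 0)
    + (if p = 0 then (if q = -1 then 1 else 0) else 0)
    + (if p = 1 then (if q = 0 then 1 else 0) else 0)
    + (if p = -1 then (if q = 0 then 1 else 0) else 0) := by
  unfold ss
  grind

theorem main_aux (n : ℕ) :
    ∑ p ∈ Finset.Icc (-((n+1 : ℕ) : ℤ)) ((n+1 : ℕ) : ℤ),
      ∑ q ∈ Finset.Icc (-((n+1 : ℕ) : ℤ)) ((n+1 : ℕ) : ℤ),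
      (bb (n+1) p * bb (n+1) q * |p ^ 2 - q ^ 2|) =
    2 * ((n+1 : ℕ) : ℤ) ^ 2 * (bb (n+1) 0) ^ 2 := by
  set I := Finset.Icc (-((n+1 : ℕ) : ℤ)) ((n+1 : ℕ) : ℤ) with hI
  have key : ∀ p q, bb (n+1) p * bb (n+1) q * |p ^ 2 - q ^ 2| =
      2 * (n+1) * (2*n+1) * (bb n q * (bb (n+1) p * ss p q))
        - 2 * (n+1) * (2*n+1) * (bb n p * (bb (n+1) q * ss p q)) := by
    intro p q
    rw [ss_abs]
    linear_combination bb (n+1) p * ss p q * bb_sq n q - bb (n+1) q * ss p q * bb_sq n p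
  have A : ∑ p ∈ I, ∑ q ∈ I, bb n q * (bb (n+1) p * ss p q) =
      ∑ p ∈ I, ∑ q ∈ I, bb n p * bb n q * (ss (p+1) q + 2 * ss p q + ss (p-1) q) := by
    rw [Finset.sum_comm]
    conv_rhs => rw [Finset.sum_comm]
    refine Finset.sum_congr rfl fun q _ => ?_
    rw [← Finset.mul_sum, lap n (fun p => ss p q), Finset.mul_sum]
    exact Finset.sum_congr rfl fun _ _ => by ring
  have B : ∑ p ∈ I, ∑ q ∈ I, bb n p * (bb (n+1) q * ss p q) =
      ∑ p ∈ I, ∑ q ∈ I, bb n p * bb n q * (ss p (q+1) + 2 * ss p q + ss p (q-1)) := by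
    refine Finset.sum_congr rfl fun p _ => ?_
    rw [← Finset.mul_sum, lap n (fun q => ss p q), Finset.mul_sum]
    exact Finset.sum_congr rfl fun _ _ => by ring
  simp only [key, Finset.sum_sub_distrib, ← Finset.mul_sum]
  have C : ∑ p ∈ I, ∑ q ∈ I, bb n q * (bb (n+1) p * ss p q) -
      ∑ p ∈ I, ∑ q ∈ I, bb n p * (bb (n+1) q * ss p q) =
      4 * bb n 0 * bb n 0 + 2 * bb n 0 * bb n 1 + 2 * bb n 0 * bb n (-1) := by
    rw [A, B]
    simp only [← Finset.sum_sub_distrib, ← mul_sub, ss_lap]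
    have m0 : (0:ℤ) ∈ I := by simp [hI]; omega
    have m1 : (1:ℤ) ∈ I := by simp [hI]; omega
    have m2 : (-1:ℤ) ∈ I := by simp [hI]; omega
    simp only [mul_add, Finset.sum_add_distrib, mul_ite, mul_zero, Finset.sum_ite_irrel,
      Finset.sum_ite_eq', Finset.sum_const_zero, m0, m1, m2, if_true]
    ring
  simp only [Finset.mul_sum] at C ⊢
  simp only [← Finset.mul_sum] at C ⊢
  have r := bb_rec n 0
  have s := bb_sq n 0
  simp only [zero_sub, zero_add] at r
  push_cast
  linear_combination 2 * ((n:ℤ)+1) * (2*n+1) * C - 2 * bb (n+1) 0 * s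
     - 4 * (n+1) * (2*n+1) * bb n 0 * r

/-- **Lemma (Brent and Osborn).** For every integer `k ≥ 0`,
`∑_p ∑_q binom(2k, k+p) * binom(2k, k+q) * |p² − q²| = 2 k² binom(2k, k)²`,
where the sums are over all integers `p, q` (effectively `-k ≤ p, q ≤ k`,
since `binom(m, j) = 0` for `j < 0` or `j > m`). -/
theorem binom_double_abs_sum (k : ℕ) :
    ∑ p ∈ Finset.Icc (-(k : ℤ)) (k : ℤ), ∑ q ∈ Finset.Icc (-(k : ℤ)) (k : ℤ),
      (((2 * k).choose ((k : ℤ) + p).toNat : ℤ) *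
        ((2 * k).choose ((k : ℤ) + q).toNat : ℤ) * |p ^ 2 - q ^ 2|) =
    2 * (k : ℤ) ^ 2 * ((2 * k).choose k : ℤ) ^ 2 := by
  rcases k with _ | n
  · simp
  · rw [← bb_nat (n+1) 0 (n+1) (by simp), ← main_aux]
    refine Finset.sum_congr rfl fun p hp => Finset.sum_congr rfl fun q hq => ?_
    rw [Finset.mem_Icc] at hp hq
    unfold bb
    rw [if_neg (by omega), if_neg (by omega)]
end

section
/- Let A be a Hadamard matrix of order h, let d ≥ 1, let B be any h×d matrix with entries in {−1, 1}, let C be the d×h matrix with c_{ij} = sgn((AᵀB)_{ji}), and let F = C A⁻¹ B. Then |f_{ij}| ≤ √h for all 1 ≤ i, j ≤ d. -/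
open Matrix

/-- Let `A` be a Hadamard matrix of order `h` (entries `±1`, `Aᵀ A = h I`),
`d ≥ 1`, `B` an `h × d` matrix with entries in `{−1, 1}`,
`C` the `d × h` matrix with `c_{ij} = sgn((Aᵀ B)_{ji})` (where `sgn x = 1`
if `x ≥ 0`, `−1` otherwise), and `F = C A⁻¹ B`.
Then `|f_{ij}| ≤ √h` for all `i, j`. -/
theorem abs_F_entry_le_sqrt (h d : ℕ) (hd : 1 ≤ d)
    (A : Matrix (Fin h) (Fin h) ℝ)
    (hA1 : ∀ i j, A i j = 1 ∨ A i j = -1)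
    (hA2 : Aᵀ * A = (h : ℝ) • 1)
    (B : Matrix (Fin h) (Fin d) ℝ)
    (hB : ∀ i j, B i j = 1 ∨ B i j = -1)
    (C : Matrix (Fin d) (Fin h) ℝ)
    (hC : ∀ i j, C i j = if 0 ≤ (Aᵀ * B) j i then (1 : ℝ) else -1)
    (F : Matrix (Fin d) (Fin d) ℝ)
    (hF : F = C * A⁻¹ * B) :
    ∀ i j, |F i j| ≤ Real.sqrt h := by
  intro i j
  rcases Nat.eq_zero_or_pos h with h0 | hpos
  · subst h0
    simp [hF, Matrix.mul_apply]
  have hp : (0 : ℝ) < h := by exact_mod_cast hpos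
  have hne : (h : ℝ) ≠ 0 := hp.ne'
  have hl : ((h : ℝ)⁻¹ • Aᵀ) * A = 1 := by
    rw [Matrix.smul_mul, hA2, smul_smul, inv_mul_cancel₀ hne, one_smul]
  have hinv : A⁻¹ = (h : ℝ)⁻¹ • Aᵀ := Matrix.inv_eq_left_inv hl
  have hr : A * Aᵀ = (h : ℝ) • 1 := by
    have h1 : A * ((h : ℝ)⁻¹ • Aᵀ) = 1 := mul_eq_one_comm.mp hl
    rw [Matrix.mul_smul] at h1
    rw [← h1, smul_smul, mul_inv_cancel₀ hne, one_smul]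
  have hFe : F i j = (h : ℝ)⁻¹ * ∑ k, C i k * (Aᵀ * B) k j := by
    rw [hF, hinv, Matrix.mul_smul, Matrix.smul_mul, Matrix.mul_assoc, Matrix.smul_apply,
      Matrix.mul_apply, smul_eq_mul]
  have hV : ∑ k, (Aᵀ * B) k j ^ 2 = (h : ℝ) * h := by
    have e : (Aᵀ * B)ᵀ * (Aᵀ * B) = (h : ℝ) • (Bᵀ * B) := by
      rw [Matrix.transpose_mul, Matrix.transpose_transpose, Matrix.mul_assoc,
        ← Matrix.mul_assoc A, hr, Matrix.smul_mul, Matrix.one_mul, Matrix.mul_smul]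
    have e2 := congrFun (congrFun e j) j
    rw [Matrix.mul_apply, Matrix.smul_apply, Matrix.mul_apply] at e2
    have e3 : ∑ k, Bᵀ j k * B k j = (h : ℝ) := by
      have : ∀ k, Bᵀ j k * B k j = 1 := by
        intro k
        rw [Matrix.transpose_apply]
        rcases hB k j with q | q <;> rw [q] <;> norm_num
      rw [Finset.sum_congr rfl fun k _ => this k]
      simp
    rw [e3, smul_eq_mul] at e2
    rw [← e2]
    exact Finset.sum_congr rfl fun k _ => by rw [Matrix.transpose_apply, sq]
  have hCs : ∑ k, C i k ^ 2 = (h : ℝ) := by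
    have : ∀ k, C i k ^ 2 = 1 := by
      intro k
      rw [hC]
      split_ifs <;> norm_num
    simp [this]
  have cs := Finset.sum_mul_sq_le_sq_mul_sq Finset.univ (fun k => C i k) (fun k => (Aᵀ * B) k j)
  rw [hV, hCs] at cs
  apply Real.abs_le_sqrt
  rw [hFe, mul_pow, inv_pow, inv_mul_le_iff₀ (by positivity)]
  calc _ ≤ _ := cs
    _ = _ := by ring
end

section
/- Let A be a Hadamard matrix of order h ≥ 4, let d ≥ 1, and for each B ∈ {−1,1}^{h×d} define C by c_{ij} = sgn((AᵀB)_{ji}) and F = C A⁻¹ B. Then, averaging over all 2^{hd} equally likely choices of B: E[f_{ii}] = 2^{−h}·h·binom(h, h/2) for each 1 ≤ i ≤ d, and E[f_{ij}] = 0 for all i ≠ j. -/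
open Matrix

/-- The `±1` sign function: `sgn x = 1` if `x ≥ 0`, `−1` if `x < 0`. -/
noncomputable def sgn (x : ℝ) : ℝ := if 0 ≤ x then 1 else -1

/-- The `h × d` sign matrix corresponding to a Boolean matrix `b`. -/
noncomputable def signMat {h d : ℕ} (b : Fin h → Fin d → Bool) :
    Matrix (Fin h) (Fin d) ℝ :=
  Matrix.of fun i j => if b i j then (1 : ℝ) else -1

/-- The matrix `C` with `c_{ij} = sgn((Aᵀ B)_{ji})`. -/
noncomputable def Cmat {h d : ℕ} (A : Matrix (Fin h) (Fin h) ℝ)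
    (B : Matrix (Fin h) (Fin d) ℝ) : Matrix (Fin d) (Fin h) ℝ :=
  Matrix.of fun i j => sgn ((Aᵀ * B) j i)

/-- The matrix `F = C A⁻¹ B`. -/
noncomputable def Fmat {h d : ℕ} (A : Matrix (Fin h) (Fin h) ℝ)
    (B : Matrix (Fin h) (Fin d) ℝ) : Matrix (Fin d) (Fin d) ℝ :=
  Cmat A B * A⁻¹ * B

/-- Expectation of `f(B)`, averaged over the `2^(h·d)` equally likely
`h × d` matrices `B` with entries in `{−1, 1}`. -/
noncomputable def expec (h d : ℕ) (f : Matrix (Fin h) (Fin d) ℝ → ℝ) : ℝ :=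
  (∑ b : Fin h → Fin d → Bool, f (signMat b)) / 2 ^ (h * d)

theorem aux_walk {X : Type*} [Fintype X] (c : ℝ) (n : ℕ) :
    ∀ (s : Fin n → X → ℝ)
      (_ : ∀ l, ∀ f : ℝ → ℝ, ∑ x, f (s l x) = c * (f 1 + f (-1)))
      (g : ℝ → ℝ),
      ∑ b : Fin n → X, g (∑ l, s l (b l)) =
        c ^ n * ∑ p ∈ Finset.HasAntidiagonal.antidiagonal n, (n.choose p.1 : ℝ) * g ((p.1 : ℝ) - p.2) := by
  induction n with
  | zero => intro s hs g; simp
  | succ n ih =>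
    intro s hs g
    rw [← (Fin.consEquiv (fun _ => X)).sum_comp, Fintype.sum_prod_type, Finset.sum_comm]
    simp only [Fin.consEquiv_apply, Fin.sum_univ_succ, Fin.cons_zero, Fin.cons_succ]
    have h1 : ∀ y : Fin n → X, ∑ x, g (s 0 x + ∑ l : Fin n, s l.succ (y l)) =
        c * (g (1 + ∑ l : Fin n, s l.succ (y l)) + g (-1 + ∑ l : Fin n, s l.succ (y l))) :=
      fun y => hs 0 (fun z => g (z + ∑ l : Fin n, s l.succ (y l)))
    rw [Finset.sum_congr rfl (fun y _ => h1 y), ← Finset.mul_sum, Finset.sum_add_distrib]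
    rw [ih (fun l => s l.succ) (fun l => hs l.succ) (fun z => g (1 + z)),
      ih (fun l => s l.succ) (fun l => hs l.succ) (fun z => g (-1 + z))]
    rw [Finset.sum_antidiagonal_choose_succ_mul (fun i j => g ((i : ℝ) - j)) n]
    have e1 : ∀ p : ℕ × ℕ, g (1 + ((p.1 : ℝ) - p.2)) = g (((p.1 + 1 : ℕ) : ℝ) - p.2) := by
      intro p; congr 1; push_cast; ring
    have e2 : ∀ p : ℕ × ℕ, g (-1 + ((p.1 : ℝ) - p.2)) = g ((p.1 : ℝ) - ((p.2 + 1 : ℕ) : ℝ)) := by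
      intro p; congr 1; push_cast; ring
    simp only [e1, e2]
    have e3 : ∑ p ∈ Finset.HasAntidiagonal.antidiagonal n, (n.choose p.1 : ℝ) * g (((p.1 + 1 : ℕ) : ℝ) - p.2)
        = ∑ p ∈ Finset.HasAntidiagonal.antidiagonal n, (n.choose p.2 : ℝ) * g (((p.1 + 1 : ℕ) : ℝ) - p.2) := by
      refine Finset.sum_congr rfl fun p hp => ?_
      rw [Nat.choose_symm_of_eq_add (Finset.HasAntidiagonal.mem_antidiagonal.mp hp).symm]
    rw [e3]
    ring

theorem aux_rec (n r : ℕ) :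
    ((n.choose r : ℕ) : ℝ) * ((n : ℝ) - r) = (n.choose (r + 1) : ℝ) * (r + 1) := by
  rcases le_or_gt r n with hr | hr
  · have := Nat.choose_succ_right_eq n r
    have h2 : ((n.choose (r+1) * (r+1) : ℕ) : ℝ) = ((n.choose r * (n - r) : ℕ) : ℝ) := by rw [this]
    push_cast [Nat.cast_sub hr] at h2
    linarith
  · rw [Nat.choose_eq_zero_of_lt hr, Nat.choose_eq_zero_of_lt (by omega)]; simp

theorem aux_low (m r : ℕ) (hr : r ≤ m) :
    ∑ k ∈ Finset.range r, ((2 * m).choose k : ℝ) * |(2 * k : ℝ) - 2 * m| =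
      r * ((2 * m).choose r : ℝ) := by
  induction r with
  | zero => simp
  | succ r ih =>
    rw [Finset.sum_range_succ, ih (by omega)]
    have h1 := aux_rec (2 * m) r
    have h2 : (r : ℝ) ≤ m := by exact_mod_cast (by omega : r ≤ m)
    rw [abs_of_nonpos (by linarith)]
    push_cast at h1 ⊢
    linarith

theorem aux_high (m j : ℕ) :
    ∑ k ∈ Finset.range (m + j), ((2 * m).choose k : ℝ) * |(2 * k : ℝ) - 2 * m| =
      2 * m * ((2 * m).choose m : ℝ) - (m + j) * ((2 * m).choose (m + j) : ℝ) := by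
  induction j with
  | zero => simp only [add_zero]; rw [aux_low m m le_rfl]; push_cast; ring
  | succ j ih =>
    rw [← add_assoc, Finset.sum_range_succ, ih]
    have h1 := aux_rec (2 * m) (m + j)
    have h2 : (0 : ℝ) ≤ j := by positivity
    push_cast at h1 ⊢
    rw [abs_of_nonneg (by linarith)]
    linarith

theorem aux_sum (m : ℕ) :
    ∑ p ∈ Finset.HasAntidiagonal.antidiagonal (2 * m), ((2 * m).choose p.1 : ℝ) * |(p.1 : ℝ) - p.2| =
      2 * m * ((2 * m).choose m : ℝ) := by
  rw [Finset.Nat.sum_antidiagonal_eq_sum_range_succ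
    (fun i j => ((2 * m).choose i : ℝ) * |(i : ℝ) - j|)]
  have := aux_high m (m + 1)
  rw [Nat.choose_eq_zero_of_lt (by omega : 2 * m < m + (m + 1))] at this
  have e : (2 * m).succ = m + (m + 1) := by omega
  rw [e]
  simp only [Nat.cast_zero, mul_zero, sub_zero] at this
  rw [← this]
  refine Finset.sum_congr rfl fun k hk => ?_
  have hk' : k ≤ 2 * m := by have := Finset.mem_range.mp hk; omega
  rw [Nat.cast_sub hk']
  congr 2
  push_cast; ring

theorem aux_bal (d : ℕ) (i : Fin d) (a : ℝ) (ha : a = 1 ∨ a = -1) (f : ℝ → ℝ) :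
    ∑ x : Fin d → Bool, f (a * (if x i then (1 : ℝ) else -1)) =
      (2 ^ d / 2) * (f 1 + f (-1)) := by
  have h1 : ∑ x : Fin d → Bool, f (a * (if x i then (1 : ℝ) else -1)) =
      ∑ x : Fin d → Bool, f (-(a * (if x i then (1 : ℝ) else -1))) := by
    refine Fintype.sum_equiv (Equiv.arrowCongr (Equiv.refl _) Equiv.boolNot) _ _ fun x => ?_
    congr 1
    cases hx : x i <;> simp [hx]
  have h2 : ∑ x : Fin d → Bool, (f (a * (if x i then (1 : ℝ) else -1)) +
      f (-(a * (if x i then (1 : ℝ) else -1)))) = 2 ^ d * (f 1 + f (-1)) := by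
    rw [Finset.sum_congr rfl (g := fun _ => f 1 + f (-1))]
    · simp [mul_add]
    · intro x _
      rcases ha with rfl | rfl <;> cases hx : x i <;> simp [add_comm]
  rw [Finset.sum_add_distrib, ← h1] at h2
  linarith

theorem aux_F {h d : ℕ} (hh : 4 ≤ h) (A : Matrix (Fin h) (Fin h) ℝ)
    (hA2 : Aᵀ * A = (h : ℝ) • 1) (B : Matrix (Fin h) (Fin d) ℝ) (i j : Fin d) :
    Fmat A B i j = (h : ℝ)⁻¹ * ∑ k, sgn (∑ l, A l k * B l i) * ∑ l, A l k * B l j := by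
  have h0 : (h : ℝ) ≠ 0 := by positivity
  have hinv : A⁻¹ = (h : ℝ)⁻¹ • Aᵀ := by
    apply Matrix.inv_eq_left_inv
    rw [Matrix.smul_mul, hA2, smul_smul, inv_mul_cancel₀ h0, one_smul]
  unfold Fmat
  rw [hinv, Matrix.mul_smul, Matrix.smul_mul, Matrix.smul_apply, Matrix.mul_assoc,
    Matrix.mul_apply, smul_eq_mul]
  simp [Cmat, Matrix.mul_apply]

theorem aux_sgn (x : ℝ) : sgn x * x = |x| := by
  unfold sgn
  split_ifs with hx
  · rw [abs_of_nonneg hx, one_mul]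
  · rw [abs_of_neg (not_le.mp hx)]; ring

/-- Let `A` be a Hadamard matrix of order `h ≥ 4` (so `4 ∣ h`), `d ≥ 1`, and
for each `B ∈ {−1,1}^{h×d}` set `C = sgn(AᵀB)ᵀ` and `F = C A⁻¹ B`.  Then,
averaging over all `2^{hd}` equally likely choices of `B`:
`E[f_{ii}] = 2^{−h} h binom(h, h/2)` and `E[f_{ij}] = 0` for `i ≠ j`. -/
theorem expec_F_entries (h d : ℕ) (h4 : 4 ∣ h) (hh : 4 ≤ h) (hd : 1 ≤ d)
    (A : Matrix (Fin h) (Fin h) ℝ)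
    (hA1 : ∀ i j, A i j = 1 ∨ A i j = -1)
    (hA2 : Aᵀ * A = (h : ℝ) • 1) :
    (∀ i : Fin d,
      expec h d (fun B => Fmat A B i i) =
        (2 : ℝ) ^ (-(h : ℤ)) * h * (h.choose (h / 2) : ℝ)) ∧
    (∀ i j : Fin d, i ≠ j → expec h d (fun B => Fmat A B i j) = 0) := by
  constructor
  · intro i
    obtain ⟨m, rfl⟩ : ∃ m, h = 2 * m := ⟨h / 2, by omega⟩
    have h0 : ((2 * m : ℕ) : ℝ) ≠ 0 := by positivity
    unfold expec
    simp only [aux_F hh A hA2, aux_sgn]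
    rw [← Finset.mul_sum, Finset.sum_comm]
    have key : ∀ k, ∑ b : Fin (2 * m) → Fin d → Bool, |∑ l, A l k * signMat b l i| =
        (2 ^ d / 2) ^ (2 * m) * (2 * m * ((2 * m).choose m : ℝ)) := by
      intro k
      have := aux_walk (2 ^ d / 2) (2 * m)
        (fun l (x : Fin d → Bool) => A l k * (if x i then (1 : ℝ) else -1))
        (fun l f => aux_bal d i (A l k) (hA1 l k) f) (fun z => |z|)
      rw [aux_sum] at this
      exact this
    rw [Finset.sum_congr rfl (fun k _ => key k), Finset.sum_const, Finset.card_univ,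
      Fintype.card_fin, nsmul_eq_mul, inv_mul_cancel_left₀ h0,
      Nat.mul_div_cancel_left m (by norm_num), _root_.zpow_neg, zpow_natCast, div_pow,
      ← pow_mul, mul_comm d (2 * m)]
    push_cast
    field_simp
  · intro i j hij
    unfold expec
    simp only [aux_F hh A hA2]
    rw [div_eq_zero_iff]
    left
    set G : (Fin h → Fin d → Bool) → ℝ := fun b => (h : ℝ)⁻¹ *
      ∑ k, sgn (∑ l, A l k * signMat b l i) * ∑ l, A l k * signMat b l j with hG
    let φ : (Fin h → Fin d → Bool) → (Fin h → Fin d → Bool) :=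
      fun b l t => if t = j then !(b l t) else b l t
    have hφ : Function.Involutive φ := by
      intro b; funext l t
      by_cases ht : t = j <;> simp [φ, ht]
    have h1 : ∀ b, G (φ b) = - G b := by
      intro b
      have e1 : ∀ l, signMat (φ b) l i = signMat b l i := by
        intro l; simp [signMat, φ, hij]
      have e2 : ∀ l, signMat (φ b) l j = - signMat b l j := by
        intro l; cases hb : b l j <;> simp [signMat, φ, hb]
      simp only [hG, e1, e2, mul_neg, Finset.sum_neg_distrib]
    have h2 := Equiv.sum_comp (hφ.toPerm φ) G
    simp only [Function.Involutive.coe_toPerm, h1, Finset.sum_neg_distrib] at h2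
    change ∑ b, G b = 0
    linarith
end

section
/- Let A be a Hadamard matrix of order h ≥ 4, let d ≥ 1, and for each B ∈ {−1,1}^{h×d} define C by c_{ij} = sgn((AᵀB)_{ji}) and F = C A⁻¹ B. Then, averaging over all 2^{hd} equally likely choices of B, E[f_{ij}²] = 1 for every pair i ≠ j with 1 ≤ i, j ≤ d. -/
open Matrix

/-- flip entry `(k, j)`. -/
def flipE {h d : ℕ} (k : Fin h) (j : Fin d) (b : Fin h → Fin d → Bool) : Fin h → Fin d → Bool :=
  fun k' j' => if k' = k ∧ j' = j then !(b k' j') else b k' j'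

theorem flipE_inv {h d : ℕ} (k : Fin h) (j : Fin d) : Function.Involutive (flipE k j) := by
  intro b
  funext k' j'
  unfold flipE
  split_ifs <;> simp

theorem sgn_sq (x : ℝ) : sgn x * sgn x = 1 := by
  unfold sgn
  split_ifs <;> norm_num

theorem row_norm (h d : ℕ) (hh : 4 ≤ h)
    (A : Matrix (Fin h) (Fin h) ℝ)
    (hA2 : Aᵀ * A = (h : ℝ) • 1) (B : Matrix (Fin h) (Fin d) ℝ) (i : Fin d) :
    ∑ k, (Cmat A B * A⁻¹) i k * (Cmat A B * A⁻¹) i k = 1 := by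
  have h0 : (h : ℝ) ≠ 0 := by
    have : h ≠ 0 := by omega
    exact_mod_cast this
  have hinv : A⁻¹ = (h : ℝ)⁻¹ • Aᵀ := by
    apply Matrix.inv_eq_left_inv
    rw [Matrix.smul_mul, hA2, smul_smul, inv_mul_cancel₀ h0, one_smul]
  have e1 : ∑ k, (Cmat A B * A⁻¹) i k * (Cmat A B * A⁻¹) i k
      = ((Cmat A B * A⁻¹) * (Cmat A B * A⁻¹)ᵀ) i i := by
    simp only [Matrix.mul_apply, Matrix.transpose_apply]
  have e2 : (Cmat A B * A⁻¹) * (Cmat A B * A⁻¹)ᵀ = (h : ℝ)⁻¹ • (Cmat A B * (Cmat A B)ᵀ) := by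
    rw [hinv, Matrix.transpose_mul, Matrix.transpose_smul, Matrix.transpose_transpose,
      Matrix.mul_assoc, ← Matrix.mul_assoc _ _ (Cmat A B)ᵀ, Matrix.smul_mul, Matrix.mul_smul, hA2]
    simp [smul_smul, h0]
  rw [e1, e2, Matrix.smul_apply, Matrix.mul_apply]
  simp [Cmat, sgn_sq, h0]

theorem Cmat_flip {h d : ℕ} (A : Matrix (Fin h) (Fin h) ℝ) (k : Fin h) (i j : Fin d) (hij : i ≠ j)
    (b : Fin h → Fin d → Bool) (l : Fin h) :
    (Cmat A (signMat (flipE k j b)) * A⁻¹) i l = (Cmat A (signMat b) * A⁻¹) i l := by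
  simp [Cmat, Matrix.mul_apply, signMat, flipE, hij]

/-- Let `A` be a Hadamard matrix of order `h ≥ 4`, `d ≥ 1`, and for each
`B ∈ {−1,1}^{h×d}` set `C = sgn(AᵀB)ᵀ` and `F = C A⁻¹ B`.  Then, averaging
over all `2^{hd}` equally likely choices of `B`, `E[f_{ij}²] = 1` for every
pair `i ≠ j`. -/
theorem expec_F_offdiag_sq (h d : ℕ) (h4 : 4 ∣ h) (hh : 4 ≤ h) (hd : 1 ≤ d)
    (A : Matrix (Fin h) (Fin h) ℝ)
    (hA1 : ∀ i j, A i j = 1 ∨ A i j = -1)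
    (hA2 : Aᵀ * A = (h : ℝ) • 1) :
    ∀ i j : Fin d, i ≠ j →
      expec h d (fun B => (Fmat A B i j) ^ 2) = 1 := by
  intro i j hij
  unfold expec
  let u : (Fin h → Fin d → Bool) → Fin h → ℝ := fun b k => (Cmat A (signMat b) * A⁻¹) i k
  let T : (Fin h → Fin d → Bool) → Fin h → Fin h → ℝ := fun b k l =>
    (u b k * signMat b k j) * (u b l * signMat b l j)
  have hF : ∀ b : Fin h → Fin d → Bool, (Fmat A (signMat b) i j) ^ 2 = ∑ k, ∑ l, T b k l := by
    intro b
    rw [Fmat, Matrix.mul_apply, sq, Finset.sum_mul_sum]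
  have hoff : ∀ k l, k ≠ l → ∑ b, T b k l = 0 := by
    intro k l hkl
    have e := Equiv.sum_comp (Function.Involutive.toPerm _ (flipE_inv k j)) (fun b => T b k l)
    have e2 : ∀ b, T (Function.Involutive.toPerm _ (flipE_inv k j) b) k l = - T b k l := by
      intro b
      have s1 : signMat (flipE k j b) k j = - signMat b k j := by
        cases hb : b k j <;> simp [signMat, flipE, hb]
      have s2 : signMat (flipE k j b) l j = signMat b l j := by
        simp [signMat, flipE, hkl.symm]
      simp only [T, u, Function.Involutive.coe_toPerm, Cmat_flip A k i j hij, s1, s2]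
      ring
    simp only [e2, Finset.sum_neg_distrib] at e
    linarith
  have hdiag : ∀ b k, T b k k = u b k * u b k := by
    intro b k
    have : signMat b k j * signMat b k j = 1 := by
      cases hb : b k j <;> simp [signMat, hb]
    simp only [T]
    linear_combination (u b k * u b k) * this
  have hsum : ∑ b : Fin h → Fin d → Bool, (Fmat A (signMat b) i j) ^ 2 = 2 ^ (h * d) := by
    simp only [hF]
    rw [Finset.sum_comm]
    have : ∀ k, ∑ b, ∑ l, T b k l = ∑ b, u b k * u b k := by
      intro k
      rw [Finset.sum_comm, Finset.sum_eq_single k (fun l _ hl => hoff k l hl.symm) (by simp)]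
      simp only [hdiag]
    simp only [this]
    rw [Finset.sum_comm]
    simp only [u, row_norm h d hh A hA2]
    simp [← pow_mul, mul_comm]
  simp only [hsum]
  exact div_self (by positivity)
end

section
/- Let A be a Hadamard matrix of order h ≥ 4, let d ≥ 1, and for each B ∈ {−1,1}^{h×d} define C by c_{ij} = sgn((AᵀB)_{ji}), F = C A⁻¹ B, and G = F + I. Then, averaging over all 2^{hd} equally likely choices of B, E[∏_{i=1}^d g_{ii}] = (1 + 2^{−h}·h·binom(h, h/2))^d. -/
open Matrix

lemma aux_choose (n j : ℕ) :
    ((j : ℝ) + 1) * (n.choose (j + 1) : ℝ) = ((n : ℝ) - j) * (n.choose j : ℝ) := by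
  rcases le_or_gt j n with hj | hj
  · have := Nat.choose_succ_right_eq n j
    have h2 : ((n.choose (j + 1) * (j + 1) : ℕ) : ℝ) = ((n.choose j * (n - j) : ℕ) : ℝ) := by
      rw [this]
    push_cast [Nat.cast_sub hj] at h2
    linarith
  · rw [Nat.choose_eq_zero_of_lt hj, Nat.choose_eq_zero_of_lt (by omega)]; simp

lemma aux_partial (m k : ℕ) :
    ∑ j ∈ Finset.range k, ((2 * m).choose j : ℝ) * |2 * (j : ℝ) - 2 * m| =
      if k ≤ m then (k : ℝ) * ((2 * m).choose k : ℝ)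
      else 2 * m * ((2 * m).choose m : ℝ) - k * ((2 * m).choose k : ℝ) := by
  induction k with
  | zero => simp
  | succ k ih =>
    rw [Finset.sum_range_succ, ih]
    have hc := aux_choose (2 * m) k
    push_cast at hc ⊢
    rcases lt_trichotomy k m with hk | hk | hk
    · rw [if_pos (by omega), if_pos (by omega)]
      have : (k : ℝ) ≤ m := by exact_mod_cast hk.le
      rw [abs_of_nonpos (by linarith), hc]; ring
    · subst hk
      rw [if_pos (by omega), if_neg (by omega), hc]
      simp; ring
    · rw [if_neg (by omega), if_neg (by omega)]
      have : (m : ℝ) ≤ k := by exact_mod_cast hk.le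
      rw [abs_of_nonneg (by linarith), hc]; ring

noncomputable def sg (b : Bool) : ℝ := if b then 1 else -1

lemma aux_abs (m : ℕ) :
    ∑ v : Fin (2 * m) → Bool, |∑ k, sg (v k)| = 2 * m * ((2 * m).choose m : ℝ) := by
  have h1 : ∑ v : Fin (2 * m) → Bool, |∑ k, sg (v k)| =
      ∑ s : Finset (Fin (2 * m)), |2 * (s.card : ℝ) - 2 * m| := by
    refine Fintype.sum_bijective (fun v => Finset.univ.filter (fun k => v k = true)) ?_ _ _ ?_
    · refine Function.bijective_iff_has_inverse.2 ⟨fun s k => decide (k ∈ s), ?_, ?_⟩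
      · intro v; ext k; simp
      · intro s; ext k; simp
    · intro v
      congr 1
      have : ∀ k, sg (v k) = 2 * (if v k = true then (1 : ℝ) else 0) - 1 := by
        intro k; unfold sg; split_ifs <;> norm_num
      simp_rw [this]
      rw [Finset.sum_sub_distrib, ← Finset.mul_sum, Finset.sum_boole]
      simp
  rw [h1]
  have h2 := Finset.sum_powerset_apply_card (fun j : ℕ => |2 * (j : ℝ) - 2 * m|)
    (x := (Finset.univ : Finset (Fin (2 * m))))
  simp only [Finset.powerset_univ, Finset.card_univ, Fintype.card_fin, nsmul_eq_mul] at h2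
  rw [h2, aux_partial]
  rw [Nat.choose_succ_self]
  split_ifs with hm
  · have : m = 0 := by omega
    subst this; simp
  · simp

lemma aux_flip (h : ℕ) (a : Fin h → ℝ) (ha : ∀ k, a k = 1 ∨ a k = -1) :
    ∑ v : Fin h → Bool, |∑ k, a k * sg (v k)| = ∑ v : Fin h → Bool, |∑ k, sg (v k)| := by
  classical
  refine Fintype.sum_bijective (fun v k => if a k = 1 then v k else !(v k)) ?_ _ _ ?_
  · refine Function.Involutive.bijective ?_
    intro v; ext k
    by_cases hk : a k = 1 <;> simp [hk]
  · intro v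
    congr 1
    refine Finset.sum_congr rfl fun k _ => ?_
    rcases ha k with hk | hk
    · simp [hk]
    · have : ¬ ((-1 : ℝ) = 1) := by norm_num
      cases hv : v k <;> simp [hk, this, sg, hv]

lemma aux_diag (h d : ℕ) (hh : 4 ≤ h)
    (A : Matrix (Fin h) (Fin h) ℝ)
    (hA2 : Aᵀ * A = (h : ℝ) • 1) (b : Fin h → Fin d → Bool) (i : Fin d) :
    (Fmat A (signMat b) + 1) i i =
      1 + (h : ℝ)⁻¹ * ∑ j, |∑ k, A k j * sg (b k i)| := by
  have h0 : (h : ℝ) ≠ 0 := by positivity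
  have hinv : A⁻¹ = (h : ℝ)⁻¹ • Aᵀ := by
    apply Matrix.inv_eq_left_inv
    rw [Matrix.smul_mul, hA2, smul_smul, inv_mul_cancel₀ h0, one_smul]
  rw [Fmat, hinv, Matrix.mul_assoc, Matrix.smul_mul, Matrix.mul_smul, Matrix.add_apply,
    Matrix.smul_apply, Matrix.one_apply_eq, add_comm, smul_eq_mul, Matrix.mul_apply]
  congr 2
  refine Finset.sum_congr rfl fun j _ => ?_
  have : (Aᵀ * signMat b) j i = ∑ k, A k j * sg (b k i) := by
    simp [Matrix.mul_apply, signMat, sg]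
  simp only [Cmat, Matrix.of_apply, this, sgn]
  split_ifs with hs
  · rw [abs_of_nonneg hs, one_mul]
  · rw [abs_of_neg (not_le.1 hs)]; ring

/-- Let `A` be a Hadamard matrix of order `h ≥ 4` (so `4 ∣ h`), `d ≥ 1`, and
for each `B ∈ {−1,1}^{h×d}` set `C = sgn(AᵀB)ᵀ`, `F = C A⁻¹ B`, `G = F + I`.
Then, averaging over all `2^{hd}` equally likely choices of `B`,
`E[∏_{i=1}^d g_{ii}] = (1 + 2^{−h} h binom(h, h/2))^d`. -/
theorem expec_prod_G_diag (h d : ℕ) (h4 : 4 ∣ h) (hh : 4 ≤ h) (hd : 1 ≤ d)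
    (A : Matrix (Fin h) (Fin h) ℝ)
    (hA1 : ∀ i j, A i j = 1 ∨ A i j = -1)
    (hA2 : Aᵀ * A = (h : ℝ) • 1) :
    expec h d (fun B => ∏ i : Fin d, (Fmat A B + 1) i i) =
      (1 + (2 : ℝ) ^ (-(h : ℤ)) * h * (h.choose (h / 2) : ℝ)) ^ d := by
  have h0 : (h : ℝ) ≠ 0 := by positivity
  unfold expec
  simp only [aux_diag h d hh A hA2]
  have hsw : ∑ b : Fin h → Fin d → Bool, ∏ i : Fin d,
      (1 + (h : ℝ)⁻¹ * ∑ j, |∑ k, A k j * sg (b k i)|) =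
      ∑ p : Fin d → Fin h → Bool, ∏ i : Fin d,
      (1 + (h : ℝ)⁻¹ * ∑ j, |∑ k, A k j * sg (p i k)|) :=
    Fintype.sum_equiv (Equiv.piComm _) _ _ fun b => rfl
  have habs : ∑ v : Fin h → Bool, |∑ k, sg (v k)| = h * (h.choose (h / 2) : ℝ) := by
    obtain ⟨m, rfl⟩ : ∃ m, h = 2 * m := ⟨h / 2, by omega⟩
    rw [aux_abs, Nat.mul_div_cancel_left m two_pos]; push_cast; ring
  rw [hsw, ← Fintype.sum_pow (fun v : Fin h → Bool =>
    (1 + (h : ℝ)⁻¹ * ∑ j, |∑ k, A k j * sg (v k)|)), pow_mul, ← div_pow]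
  congr 1
  rw [Finset.sum_add_distrib, ← Finset.mul_sum, Finset.sum_comm]
  simp_rw [fun j => aux_flip h (fun k => A k j) (fun k => hA1 k j), habs]
  simp
  field_simp
end

section
/- For every integer h divisible by 4 with h ≥ 4, the quantity μ(h) satisfies √(2h/π) + 0.9 < μ(h) < √(2h/π) + 1, and μ is monotonic increasing along multiples of 4, i.e. μ(h) < μ(h+4). -/
/-- `μ(h) = 1 + 2^{−h} h binom(h, h/2)`. -/
noncomputable def mu (h : ℕ) : ℝ :=
  1 + (2 : ℝ) ^ (-(h : ℤ)) * h * (h.choose (h / 2) : ℝ)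

noncomputable def xx (n : ℕ) : ℝ := 2 * n * (n.centralBinom : ℝ) / 4 ^ n

lemma mu_eq (n : ℕ) : mu (2 * n) = 1 + xx n := by
  unfold mu xx
  rw [Nat.mul_div_cancel_left n (by norm_num : 0 < 2), ← Nat.centralBinom_eq_two_mul_choose]
  rw [zpow_neg, zpow_natCast, pow_mul]
  push_cast
  norm_num
  field_simp

lemma cb_succ (n : ℕ) :
    ((n + 1).centralBinom : ℝ) = 2 * (2 * n + 1) * n.centralBinom / (n + 1) := by
  have := Nat.succ_mul_centralBinom_succ n
  have h : ((n : ℝ) + 1) * (n + 1).centralBinom = 2 * (2 * n + 1) * n.centralBinom := by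
    exact_mod_cast this
  rw [eq_div_iff (by positivity)]
  linarith

lemma xx_succ (n : ℕ) (hn : 0 < n) : xx n < xx (n + 1) := by
  have hc : (0 : ℝ) < n.centralBinom := by exact_mod_cast Nat.centralBinom_pos n
  have hn' : (0 : ℝ) < n := by exact_mod_cast hn
  have : xx (n + 1) = xx n + n.centralBinom / 4 ^ n := by
    unfold xx
    rw [cb_succ, pow_succ]
    push_cast
    field_simp
    ring
  rw [this]
  have : 0 < (n.centralBinom : ℝ) / 4 ^ n := by positivity
  linarith

lemma cb_W (n : ℕ) : (n.centralBinom : ℝ) ^ 2 * Real.Wallis.W n * (2 * n + 1) = (4 ^ n) ^ 2 := by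
  induction n with
  | zero => simp [Real.Wallis.W]
  | succ n ih =>
    rw [Real.Wallis.W_succ, cb_succ, pow_succ 4 n, mul_pow (4 ^ n), ← ih]
    push_cast
    field_simp
    ring

lemma xx_W (n : ℕ) : xx n ^ 2 * (Real.Wallis.W n * (2 * n + 1)) = 4 * n ^ 2 := by
  have := cb_W n
  unfold xx
  rw [div_pow, div_mul_eq_mul_div, div_eq_iff (by positivity), ← this]
  ring

lemma xx_nonneg (n : ℕ) : 0 ≤ xx n := by unfold xx; positivity

lemma xx_lt (n : ℕ) (hn : 0 < n) : xx n < Real.sqrt (4 * n / Real.pi) := by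
  apply Real.lt_sqrt_of_sq_lt
  have h1 := xx_W n
  have h2 := Real.Wallis.le_W n
  have hn' : (0 : ℝ) < n := by exact_mod_cast hn
  have hp := Real.pi_pos
  rw [lt_div_iff₀ hp]
  have h3 : xx n ^ 2 * (((2 : ℝ) * n + 1) / (2 * n + 2) * (Real.pi / 2) * (2 * n + 1)) ≤ 4 * n ^ 2 := by
    rw [← h1]; gcongr
  have h4 : xx n ^ 2 * (((2 : ℝ) * n + 1) / (2 * n + 2) * (Real.pi / 2) * (2 * n + 1))
    = xx n ^ 2 * Real.pi * (2 * n + 1) ^ 2 / (4 * (n + 1)) := by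
    field_simp
    ring
  rw [h4, div_le_iff₀ (by positivity)] at h3
  by_contra! hc
  have : 4 * (n : ℝ) * (2 * n + 1) ^ 2 ≤ xx n ^ 2 * Real.pi * (2 * n + 1) ^ 2 := by gcongr
  nlinarith

lemma lt_xx (n : ℕ) (hn : 8 ≤ n) : Real.sqrt (4 * n / Real.pi) - 0.1 < xx n := by
  have h1 := xx_W n
  have h2 := Real.Wallis.W_le n
  have hn' : (8 : ℝ) ≤ n := by exact_mod_cast hn
  have hp := Real.pi_pos
  have hp1 := Real.pi_gt_d2
  have hp2 := Real.pi_lt_d4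
  have hs0 : (3.19 : ℝ) ≤ Real.sqrt (4 * n / Real.pi) := by
    apply Real.le_sqrt_of_sq_le
    rw [le_div_iff₀ hp]
    nlinarith
  have hs2 : Real.sqrt (4 * n / Real.pi) ^ 2 = 4 * n / Real.pi := Real.sq_sqrt (by positivity)
  set s := Real.sqrt (4 * n / Real.pi) with hs
  have hn2 : (n : ℝ) = s ^ 2 * Real.pi / 4 := by rw [hs2]; field_simp
  have h3 : 4 * (n : ℝ) ^ 2 ≤ xx n ^ 2 * (Real.pi / 2 * (2 * n + 1)) := by
    rw [← h1]; gcongr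
  -- s^4 π^2/4 ≤ x^2 (π/2) (s^2 π/2+1)
  have h5 : s ^ 4 * Real.pi ≤ xx n ^ 2 * (s ^ 2 * Real.pi + 2) := by
    rw [hn2] at h3
    have : Real.pi * (s ^ 4 * Real.pi) ≤ Real.pi * (xx n ^ 2 * (s ^ 2 * Real.pi + 2)) := by
      nlinarith
    exact le_of_mul_le_mul_left this hp
  apply lt_of_pow_lt_pow_left₀ 2 (xx_nonneg n)
  have hpos : 0 < s ^ 2 * Real.pi + 2 := by positivity
  refine lt_of_mul_lt_mul_right (lt_of_lt_of_le ?_ h5) hpos.le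
  have h6 : 0 < 0.2 * s - 0.01 := by linarith
  have h7 : 2 * s ^ 2 < (0.2 * s - 0.01) * (s ^ 2 * 3.14 + 2) := by
    nlinarith [mul_nonneg (sub_nonneg.2 hs0) (sub_nonneg.2 hs0), mul_nonneg (sub_nonneg.2 hs0) (sq_nonneg s)]
  have h8 : (0.2 * s - 0.01) * (s ^ 2 * 3.14 + 2) ≤ (0.2 * s - 0.01) * (s ^ 2 * Real.pi + 2) := by
    gcongr
  nlinarith

lemma lt_small (n : ℕ) (y : ℝ) (hy : xx n = y) (h0 : 0 < y)
    (h : 4 * n < (y + 0.1) ^ 2 * 3.1415) : Real.sqrt (4 * n / Real.pi) - 0.1 < xx n := by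
  rw [hy, sub_lt_iff_lt_add, Real.sqrt_lt' (by linarith), div_lt_iff₀ Real.pi_pos]
  have := Real.pi_gt_d4
  have : (y + 0.1) ^ 2 * 3.1415 ≤ (y + 0.1) ^ 2 * Real.pi := by gcongr
  linarith

/-- For every integer `h` divisible by `4` with `h ≥ 4`:
`√(2h/π) + 0.9 < μ(h) < √(2h/π) + 1`, and `μ` is monotonic increasing
along multiples of `4`, i.e. `μ(h) < μ(h+4)`. -/
theorem mu_bounds_and_mono (h : ℕ) (h4 : 4 ∣ h) (hh : 4 ≤ h) :
    Real.sqrt (2 * h / Real.pi) + 0.9 < mu h ∧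
    mu h < Real.sqrt (2 * h / Real.pi) + 1 ∧
    mu h < mu (h + 4) := by
  obtain ⟨m, rfl⟩ := h4
  have e1 : 4 * m = 2 * (2 * m) := by ring
  have e2 : 4 * m + 4 = 2 * (2 * m + 1 + 1) := by ring
  have e3 : (2 : ℝ) * ((4 * m : ℕ) : ℝ) / Real.pi = 4 * ((2 * m : ℕ) : ℝ) / Real.pi := by
    push_cast; ring
  rw [e2, e3, e1, mu_eq, mu_eq]
  have hm : 1 ≤ m := by omega
  refine ⟨?_, ?_, ?_⟩
  · have : Real.sqrt (4 * ((2 * m : ℕ) : ℝ) / Real.pi) - 0.1 < xx (2 * m) := by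
      by_cases h8 : 4 ≤ m
      · exact lt_xx _ (by omega)
      · have c2 : Nat.centralBinom 2 = 6 := by decide
        have c4 : Nat.centralBinom 4 = 70 := by decide
        have c6 : Nat.centralBinom 6 = 924 := by decide
        interval_cases m
        · exact lt_small 2 1.5 (by norm_num [xx, c2]) (by norm_num) (by norm_num)
        · exact lt_small 4 2.1875 (by norm_num [xx, c4]) (by norm_num) (by norm_num)
        · exact lt_small 6 (12 * 924 / 4096) (by norm_num [xx, c6]) (by norm_num) (by norm_num)
    linarith
  · have := xx_lt (2 * m) (by omega)
    linarith
  · have a := xx_succ (2 * m) (by omega)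
    have b := xx_succ (2 * m + 1) (by omega)
    linarith
end

section
/- For every integer h divisible by 4 with h ≥ 4, the quantity σ(h)² satisfies 1 − 3/π < σ(h)² ≤ σ(4)² = 1/4, and σ(·)² is monotonic decreasing along multiples of 4, i.e. σ(h+4)² < σ(h)²; moreover σ(h)² → 1 − 3/π as h → ∞. -/
open Filter

/-- `σ(h)² = 1 + h(h−1) 2^{−(h+1)} binom(h/2, h/4)² − h² 2^{−2h} binom(h, h/2)²`. -/
noncomputable def sigmaSq (h : ℕ) : ℝ :=
  1 + (h : ℝ) * ((h : ℝ) - 1) * (2 : ℝ) ^ (-((h : ℤ) + 1)) *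
        ((h / 2).choose (h / 4) : ℝ) ^ 2 -
    (h : ℝ) ^ 2 * (2 : ℝ) ^ (-(2 * (h : ℤ))) * (h.choose (h / 2) : ℝ) ^ 2

noncomputable def uu (n : ℕ) : ℝ := ((Nat.centralBinom n : ℝ) / 4 ^ n) ^ 2

lemma uu_pos (n : ℕ) : 0 < uu n := by
  unfold uu
  have : (0 : ℝ) < Nat.centralBinom n := by exact_mod_cast Nat.centralBinom_pos n
  positivity

lemma uu_succ (n : ℕ) : uu (n + 1) = uu n * ((2 * n + 1) / (2 * n + 2)) ^ 2 := by
  unfold uu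
  have h : ((n : ℝ) + 1) * Nat.centralBinom (n + 1) = 2 * (2 * n + 1) * Nat.centralBinom n := by
    exact_mod_cast Nat.succ_mul_centralBinom_succ n
  have h2 : (Nat.centralBinom (n + 1) : ℝ) = 2 * (2 * n + 1) * Nat.centralBinom n / (n + 1) := by
    rw [eq_div_iff (by positivity), ← h]; ring
  rw [h2, ← mul_pow, pow_succ (4 : ℝ) n]
  congr 1
  field_simp
  ring

lemma uu_wallis (n : ℕ) : uu n * (2 * n + 1) * Real.Wallis.W n = 1 := by
  induction n with
  | zero => simp [uu, Real.Wallis.W]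
  | succ n ih =>
    rw [uu_succ, Real.Wallis.W_succ]
    push_cast
    refine Eq.trans ?_ ih
    field_simp
    ring

lemma sigma_eq (k : ℕ) :
    sigmaSq (4 * k) = 1 + 2 * k * (4 * k - 1) * uu k - 16 * (k : ℝ) ^ 2 * uu (2 * k) := by
  have h1 : 4 * k / 2 = 2 * k := by omega
  have h2 : 4 * k / 4 = k := by omega
  have e1 : (2 : ℝ) ^ (-(((4 * k : ℕ) : ℤ) + 1)) = (((4 : ℝ) ^ k) ^ 2)⁻¹ / 2 := by
    rw [zpow_neg, zpow_add₀ (by norm_num), zpow_natCast, ← pow_mul, mul_inv, pow_mul, mul_comm k 2,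
      pow_mul]
    norm_num [div_eq_mul_inv]
  have e2 : (2 : ℝ) ^ (-(2 * ((4 * k : ℕ) : ℤ))) = (((4 : ℝ) ^ (2 * k)) ^ 2)⁻¹ := by
    rw [zpow_neg]
    congr 1
    rw [← pow_mul, show (4 : ℝ) = 2 ^ 2 by norm_num, ← pow_mul, ← zpow_natCast]
    congr 1
    push_cast
    ring
  unfold sigmaSq uu
  rw [e1, e2, h1, h2, Nat.centralBinom, Nat.centralBinom, show 2 * (2 * k) = 4 * k by ring,
    div_pow, div_pow]
  push_cast
  ring

lemma lim_rat (g : ℝ → ℝ) (hg : ContinuousAt g 0) :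
    Tendsto (fun k : ℕ => g ((k : ℝ)⁻¹)) atTop (nhds (g 0)) :=
  hg.tendsto.comp (tendsto_inv_atTop_zero.comp tendsto_natCast_atTop_atTop)

noncomputable def vv (n : ℕ) : ℝ := (n + 1 / 4) * uu n

lemma vv_tendsto : Tendsto vv atTop (nhds (1 / Real.pi)) := by
  have h := (lim_rat (fun x => (1 + x / 4) / (2 + x)) (by
    apply ContinuousAt.div <;> first | fun_prop | norm_num)).div
    Real.Wallis.tendsto_W_nhds_pi_div_two (by positivity)
  have e : ((1 + (0:ℝ) / 4) / (2 + 0)) / (Real.pi / 2) = 1 / Real.pi := by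
    field_simp; norm_num
  rw [e] at h
  refine h.congr' ?_
  filter_upwards [eventually_gt_atTop 0] with k hk
  have hk' : (0 : ℝ) < k := by exact_mod_cast hk
  have hW := Real.Wallis.W_pos k
  have := uu_wallis k
  have hu : uu k = 1 / ((2 * k + 1) * Real.Wallis.W k) := by
    rw [eq_div_iff (by positivity)]; linarith
  simp only [Pi.div_apply, vv]
  rw [hu]
  field_simp

lemma vv_mono : Monotone vv := by
  refine monotone_nat_of_le_succ fun n => ?_
  unfold vv
  rw [uu_succ]
  push_cast
  have hu := uu_pos n
  have : (n + 1 / 4 : ℝ) ≤ (n + 1 + 1 / 4) * ((2 * n + 1) / (2 * n + 2)) ^ 2 := by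
    rw [div_pow, ← mul_div_assoc, le_div_iff₀ (by positivity)]
    nlinarith
  nlinarith

lemma vv_le (n : ℕ) : vv n ≤ 1 / Real.pi := vv_mono.ge_of_tendsto vv_tendsto n

lemma uu_tendsto : Tendsto uu atTop (nhds 0) := by
  have h := (lim_rat (fun x => x / (1 + x / 4)) (by
    apply ContinuousAt.div <;> first | fun_prop | norm_num)).mul vv_tendsto
  simp only [zero_div, zero_mul] at h
  refine h.congr' ?_
  filter_upwards [eventually_gt_atTop 0] with k hk
  have hk' : (0 : ℝ) < k := by exact_mod_cast hk
  unfold vv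
  field_simp

noncomputable def ww (m : ℕ) : ℝ := (((m + 1 : ℕ) : ℝ) + 1 / 4 + 1 / (32 * ((m + 1 : ℕ) : ℝ))) * uu (m + 1)

lemma ww_anti : Antitone ww := by
  refine antitone_nat_of_succ_le fun n => ?_
  unfold ww
  rw [uu_succ (n + 1)]
  have hu := uu_pos (n + 1)
  have hx : (0 : ℝ) < ((n + 1 : ℕ) : ℝ) := by positivity
  rw [show (((n + 1 + 1 : ℕ)) : ℝ) = ((n + 1 : ℕ) : ℝ) + 1 by push_cast; ring]
  generalize ((n + 1 : ℕ) : ℝ) = x at *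
  have : (x + 1 + 1 / 4 + 1 / (32 * (x + 1))) * ((2 * x + 1) / (2 * x + 2)) ^ 2
      ≤ x + 1 / 4 + 1 / (32 * x) := by
    rw [← sub_nonneg]
    have : x + 1 / 4 + 1 / (32 * x) - (x + 1 + 1 / 4 + 1 / (32 * (x + 1))) * ((2 * x + 1) / (2 * x + 2)) ^ 2
      = (3 * x + 4) / (128 * x * (x + 1) ^ 3) := by
      field_simp
      ring
    rw [this]; positivity
  nlinarith

lemma ww_eq (m : ℕ) : ww m = vv (m + 1) + uu (m + 1) / (32 * ((m + 1 : ℕ) : ℝ)) := by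
  unfold ww vv; ring

lemma ww_tendsto : Tendsto ww atTop (nhds (1 / Real.pi)) := by
  have h1 := (tendsto_add_atTop_iff_nat 1).2 vv_tendsto
  have h2 := (tendsto_add_atTop_iff_nat 1).2
    (uu_tendsto.mul (lim_rat (fun x => x / 32) (by fun_prop)))
  have h := h1.add h2
  simp only [zero_mul, add_zero] at h
  refine h.congr fun m => ?_
  rw [ww_eq]
  field_simp

lemma le_ww (n : ℕ) : 1 / Real.pi ≤ ww n := ww_anti.le_of_tendsto ww_tendsto n

noncomputable def dd (n : ℕ) : ℝ := n * (1 / Real.pi - vv n)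

lemma dd_tendsto : Tendsto dd atTop (nhds 0) := by
  refine tendsto_of_tendsto_of_tendsto_of_le_of_le tendsto_const_nhds uu_tendsto ?_ ?_
  · intro n
    exact mul_nonneg (Nat.cast_nonneg n) (sub_nonneg.2 (vv_le n))
  · intro n
    rcases n with _ | m
    · simp [dd, (uu_pos 0).le]
    · have h := le_ww m
      rw [ww_eq] at h
      have hx : (0 : ℝ) < ((m + 1 : ℕ) : ℝ) := by positivity
      have hu := uu_pos (m + 1)
      unfold dd
      calc ((m + 1 : ℕ) : ℝ) * (1 / Real.pi - vv (m + 1))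
          ≤ ((m + 1 : ℕ) : ℝ) * (uu (m + 1) / (32 * ((m + 1 : ℕ) : ℝ))) := by
            apply mul_le_mul_of_nonneg_left _ hx.le
            linarith
        _ = uu (m + 1) / 32 := by field_simp
        _ ≤ uu (m + 1) := by linarith

lemma tendsto_two_mul : Tendsto (fun k : ℕ => 2 * k) atTop atTop :=
  tendsto_id.const_mul_atTop' (by norm_num)

lemma sigma_tendsto :
    Tendsto (fun k : ℕ => sigmaSq (4 * k)) atTop (nhds (1 - 3 / Real.pi)) := by
  have h1 := (lim_rat (fun x => 1 + 8 * (-12 - x) / ((4 + x) * (8 + x)) * (1 / Real.pi)) (by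
    apply ContinuousAt.add (by fun_prop)
    apply ContinuousAt.mul _ (by fun_prop)
    apply ContinuousAt.div <;> first | fun_prop | norm_num))
  have h2 := (lim_rat (fun x => 8 * (4 - x) / (4 + x)) (by
    apply ContinuousAt.div <;> first | fun_prop | norm_num)).mul dd_tendsto
  have h3 := (lim_rat (fun x => 32 / (8 + x)) (by
    apply ContinuousAt.div <;> first | fun_prop | norm_num)).mul (dd_tendsto.comp tendsto_two_mul)
  have h := (h1.sub h2).add h3
  have e : (1 + 8 * (-12 - (0:ℝ)) / ((4 + 0) * (8 + 0)) * (1 / Real.pi)) - 8 * (4 - 0) / (4 + 0) * 0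
    + 32 / (8 + 0) * 0 = 1 - 3 / Real.pi := by ring
  rw [e] at h
  refine h.congr' ?_
  filter_upwards [eventually_gt_atTop 0] with k hk
  have hk' : (0 : ℝ) < k := by exact_mod_cast hk
  rw [sigma_eq]
  simp only [Function.comp, dd, vv]
  push_cast
  generalize uu k = a
  generalize uu (2 * k) = b
  generalize 1 / Real.pi = p
  field_simp
  ring

noncomputable def NN (x : ℝ) : ℝ := (8 * x + 3) * (32 * x ^ 2 + 24 * x + 3) * (x + 1)
noncomputable def DD (x : ℝ) : ℝ := 2 * (2 * x + 1) ^ 2 * (16 * x ^ 2 + 20 * x + 3)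

lemma NN_pos (x : ℝ) (hx : 0 ≤ x) : 0 < NN x := by unfold NN; positivity
lemma DD_pos (x : ℝ) (hx : 0 ≤ x) : 0 < DD x := by unfold DD; positivity

noncomputable def QQ (k : ℕ) : ℝ := uu k * DD k / (uu (2 * k) * NN k)

lemma uu_two_succ (k : ℕ) : uu (2 * (k + 1)) =
    uu (2 * k) * ((4 * k + 1) * (4 * k + 3) / ((4 * k + 2) * (4 * k + 4))) ^ 2 := by
  rw [show 2 * (k + 1) = 2 * k + 1 + 1 by ring, uu_succ, uu_succ]
  push_cast
  field_simp
  ring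

lemma QQ_mono : StrictMono QQ := by
  refine strictMono_nat_of_lt_succ fun k => ?_
  unfold QQ
  rw [uu_succ, uu_two_succ]
  push_cast
  have ha := uu_pos k
  have hb := uu_pos (2 * k)
  have hx : (0 : ℝ) ≤ k := Nat.cast_nonneg k
  generalize uu k = a at *
  generalize uu (2 * k) = b at *
  generalize (k : ℝ) = x at *
  have hN := NN_pos x hx
  have hN1 := NN_pos (x + 1) (by linarith)
  have e : a * ((2 * x + 1) / (2 * x + 2)) ^ 2 * DD (x + 1) /
      (b * ((4 * x + 1) * (4 * x + 3) / ((4 * x + 2) * (4 * x + 4))) ^ 2 * NN (x + 1)) =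
      (a / b) * ((16 * x ^ 2 + 16 * x + 4) ^ 2 * DD (x + 1) /
        ((16 * x ^ 2 + 16 * x + 3) ^ 2 * NN (x + 1))) := by
    rw [show 16 * x ^ 2 + 16 * x + 3 = (4 * x + 1) * (4 * x + 3) by ring]
    field_simp
    ring
  rw [e, show a * DD x / (b * NN x) = (a / b) * (DD x / NN x) by field_simp]
  apply mul_lt_mul_of_pos_left _ (by positivity)
  rw [div_lt_div_iff₀ hN (by positivity), ← sub_pos]
  have : (16 * x ^ 2 + 16 * x + 4) ^ 2 * DD (x + 1) * NN x
      - DD x * ((16 * x ^ 2 + 16 * x + 3) ^ 2 * NN (x + 1)) =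
      30996 + 571770 * x + 4244880 * x ^ 2 + 16953064 * x ^ 3 + 40585696 * x ^ 4
      + 60841856 * x ^ 5 + 57425920 * x ^ 6 + 33062912 * x ^ 7 + 10584064 * x ^ 8
      + 1441792 * x ^ 9 := by
    unfold NN DD; ring
  rw [this]
  positivity

lemma QQ_tendsto : Tendsto QQ atTop (nhds 1) := by
  have hpi := Real.pi_pos
  have h1 := vv_tendsto.div (vv_tendsto.comp tendsto_two_mul) (by positivity)
  have h2 := lim_rat (fun x => (2 + x / 4) * (2 * (2 + x) ^ 2 * (16 + 20 * x + 3 * x ^ 2)) /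
    ((1 + x / 4) * ((8 + 3 * x) * (32 + 24 * x + 3 * x ^ 2) * (1 + x)))) (by
    apply ContinuousAt.div <;> first | fun_prop | norm_num)
  have h := h1.mul h2
  have e : (1 / Real.pi) / (1 / Real.pi) * ((2 + (0:ℝ) / 4) * (2 * (2 + 0) ^ 2 * (16 + 20 * 0 + 3 * 0 ^ 2)) /
    ((1 + 0 / 4) * ((8 + 3 * 0) * (32 + 24 * 0 + 3 * 0 ^ 2) * (1 + 0)))) = 1 := by
    rw [div_self (by positivity)]; norm_num
  rw [e] at h
  refine h.congr' ?_
  filter_upwards [eventually_gt_atTop 0] with k hk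
  have hk' : (0 : ℝ) < k := by exact_mod_cast hk
  have hb := uu_pos (2 * k)
  simp only [Pi.div_apply, Function.comp, vv, QQ, NN, DD]
  push_cast
  generalize uu k = a at *
  generalize uu (2 * k) = b at *
  generalize (k : ℝ) = x at *
  have e1 : (2 + x⁻¹ / 4) = (2 * x + 1 / 4) / x := by field_simp
  have e2 : (2 + x⁻¹) = (2 * x + 1) / x := by field_simp
  have e3 : (16 + 20 * x⁻¹ + 3 * x⁻¹ ^ 2) = (16 * x ^ 2 + 20 * x + 3) / x ^ 2 := by field_simp
  have e4 : (1 + x⁻¹ / 4) = (x + 1 / 4) / x := by field_simp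
  have e5 : (8 + 3 * x⁻¹) = (8 * x + 3) / x := by field_simp
  have e6 : (32 + 24 * x⁻¹ + 3 * x⁻¹ ^ 2) = (32 * x ^ 2 + 24 * x + 3) / x ^ 2 := by field_simp
  have e7 : (1 + x⁻¹) = (x + 1) / x := by field_simp
  rw [e1, e2, e3, e4, e5, e6, e7]
  have p1 : 0 < 2 * x + 1 / 4 := by positivity
  have p2 : 0 < x + 1 / 4 := by positivity
  have p3 : 0 < 32 * x ^ 2 + 24 * x + 3 := by positivity
  generalize 2 * x + 1 / 4 = y1 at *
  generalize x + 1 / 4 = y2 at *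
  generalize 32 * x ^ 2 + 24 * x + 3 = y3 at *
  generalize 16 * x ^ 2 + 20 * x + 3 = y4 at *
  field_simp

lemma QQ_lt (k : ℕ) : QQ k < 1 :=
  (QQ_mono (Nat.lt_succ_self k)).trans_le (QQ_mono.monotone.ge_of_tendsto QQ_tendsto (k + 1))

lemma sigma_step (k : ℕ) : sigmaSq (4 * (k + 1)) < sigmaSq (4 * k) := by
  rw [sigma_eq, sigma_eq, uu_succ, uu_two_succ]
  have h := QQ_lt k
  unfold QQ at h
  push_cast
  have ha := uu_pos k
  have hb := uu_pos (2 * k)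
  have hx : (0 : ℝ) ≤ k := Nat.cast_nonneg k
  generalize uu k = a at *
  generalize uu (2 * k) = b at *
  generalize (k : ℝ) = x at *
  have hN := NN_pos x hx
  rw [div_lt_one (by positivity)] at h
  rw [← sub_pos]
  have : 1 + 2 * x * (4 * x - 1) * a - 16 * x ^ 2 * b -
    (1 + 2 * (x + 1) * (4 * (x + 1) - 1) * (a * ((2 * x + 1) / (2 * x + 2)) ^ 2) -
      16 * (x + 1) ^ 2 * (b * ((4 * x + 1) * (4 * x + 3) / ((4 * x + 2) * (4 * x + 4))) ^ 2))
    = (b * NN x - a * DD x) / (4 * (2 * x + 1) ^ 2 * (x + 1)) := by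
    unfold NN DD
    field_simp
    ring
  rw [this]
  exact div_pos (by linarith) (by positivity)

/-- For every integer `h` divisible by `4` with `h ≥ 4`:
`1 − 3/π < σ(h)² ≤ σ(4)² = 1/4`, `σ(·)²` is monotonic decreasing along
multiples of `4` (`σ(h+4)² < σ(h)²`), and `σ(h)² → 1 − 3/π` as `h → ∞`. -/
theorem sigmaSq_bounds_mono_limit :
    (∀ h : ℕ, 4 ∣ h → 4 ≤ h →
      1 - 3 / Real.pi < sigmaSq h ∧ sigmaSq h ≤ sigmaSq 4 ∧
      sigmaSq (h + 4) < sigmaSq h) ∧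
    sigmaSq 4 = 1 / 4 ∧
    Tendsto (fun k : ℕ => sigmaSq (4 * k)) atTop (nhds (1 - 3 / Real.pi)) := by
  have anti : StrictAnti (fun k : ℕ => sigmaSq (4 * k)) := strictAnti_nat_of_succ_lt sigma_step
  refine ⟨?_, ?_, sigma_tendsto⟩
  · rintro h ⟨k, rfl⟩ hk
    refine ⟨?_, ?_, sigma_step k⟩
    · exact (anti.antitone.le_of_tendsto sigma_tendsto (k + 1)).trans_lt (sigma_step k)
    · exact anti.antitone (show 1 ≤ k by omega)
  · have := sigma_eq 1
    rw [mul_one] at this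
    rw [this]
    norm_num [uu, Nat.centralBinom, Nat.choose]
end

section
/- Suppose there exist positive real constants α and β such that for every odd positive integer q and every integer t ≥ α·log₂(q) + β, there exists a Hadamard matrix of order 2^t·q. Then for every integer n ≥ 2^{⌈α·log₂(3) + β⌉}, there exists a Hadamard order h with h ≤ n and n − h < 12·2^β·h^{α/(1+α)}. -/
open Matrix

/-- A positive integer `m` is a Hadamard order if there is an `m × m` matrix
with entries in `{−1, 1}` satisfying `Aᵀ A = m I`. -/
def IsHadamardOrder (m : ℕ) : Prop :=
  ∃ A : Matrix (Fin m) (Fin m) ℝ,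
    (∀ i j, A i j = 1 ∨ A i j = -1) ∧ Aᵀ * A = (m : ℝ) • 1

/-- Suppose there exist positive real constants `α`, `β` such that for every
odd positive integer `q` and every integer `t ≥ α log₂ q + β` there exists a
Hadamard matrix of order `2^t q`.  Then for every integer
`n ≥ 2^⌈α log₂ 3 + β⌉`, there exists a Hadamard order `h` with `h ≤ n` and
`n − h < 12 · 2^β · h^{α/(1+α)}`. -/
theorem hadamard_gap_bound (α β : ℝ) (hα : 0 < α) (hβ : 0 < β)
    (hyp : ∀ q : ℕ, Odd q → 0 < q → ∀ t : ℕ,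
      α * Real.logb 2 q + β ≤ (t : ℝ) → IsHadamardOrder (2 ^ t * q)) :
    ∀ n : ℕ, (2 : ℝ) ^ (⌈α * Real.logb 2 3 + β⌉ : ℤ) ≤ (n : ℝ) →
      ∃ h : ℕ, IsHadamardOrder h ∧ h ≤ n ∧
        (n : ℝ) - (h : ℝ) < 12 * (2 : ℝ) ^ β * (h : ℝ) ^ (α / (1 + α)) := by
  intro n hn
  have hlog3 : (1 : ℝ) < Real.logb 2 3 := by
    rw [Real.lt_logb_iff_rpow_lt (by norm_num) (by norm_num)]
    norm_num
  have hnpos : (0 : ℝ) < n := lt_of_lt_of_le (by positivity) hn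
  obtain ⟨L, hL⟩ : ∃ L : ℝ, L = Real.logb 2 n := ⟨_, rfl⟩
  have hnL : (n : ℝ) = (2 : ℝ) ^ L := by
    rw [hL, Real.rpow_logb (by norm_num) (by norm_num) hnpos]
  have hmL : ((⌈α * Real.logb 2 3 + β⌉ : ℤ) : ℝ) ≤ L := by
    rw [hL, Real.le_logb_iff_rpow_le (by norm_num) hnpos, Real.rpow_intCast]
    exact hn
  have hkm : ⌈α * Real.logb 2 3 + β⌉ ≤ ⌊L⌋ := Int.le_floor.mpr hmL
  have hk1 : α * Real.logb 2 3 + β ≤ (⌊L⌋ : ℝ) :=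
    (Int.le_ceil _).trans (by exact_mod_cast hkm)
  have hα1 : 0 < 1 + α := by linarith
  have hL0 : 0 < L := by
    have : 0 < α * Real.logb 2 3 := by positivity
    linarith [Int.floor_le L]
  obtain ⟨x, hx⟩ : ∃ x : ℝ, x = (α * L + β) / (1 + α) := ⟨_, rfl⟩
  have hx0 : 0 ≤ x := by rw [hx]; positivity
  have hxk : x ≤ (⌊L⌋ : ℝ) := by
    rw [hx, div_le_iff₀ hα1]
    have h1 : L < ⌊L⌋ + 1 := Int.lt_floor_add_one L
    nlinarith
  obtain ⟨t, ht⟩ : ∃ t : ℕ, t = ⌈x⌉₊ := ⟨_, rfl⟩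
  have hxt : x ≤ t := by rw [ht]; exact Nat.le_ceil x
  have htx : (t : ℝ) < x + 1 := by rw [ht]; exact Nat.ceil_lt_add_one hx0
  have htL : (t : ℝ) ≤ L := by
    have h1 : (⌈x⌉ : ℤ) ≤ ⌊L⌋ := Int.ceil_le.mpr hxk
    have h2 : ((⌈x⌉₊ : ℕ) : ℤ) = ⌈x⌉ := Int.natCast_ceil_eq_ceil hx0
    rw [← h2, ← ht] at h1
    have h3 : ((t : ℤ) : ℝ) ≤ (⌊L⌋ : ℝ) := by exact_mod_cast h1
    have h4 := Int.floor_le L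
    push_cast at h3
    linarith
  have h2tn : 2 ^ t ≤ n := by
    have : (2 : ℝ) ^ (t : ℝ) ≤ n := by
      rw [hnL]; exact Real.rpow_le_rpow_of_exponent_le (by norm_num) htL
    rw [Real.rpow_natCast] at this
    exact_mod_cast this
  have h2t : 0 < 2 ^ t := by positivity
  have hm1 : 1 ≤ n / 2 ^ t := (Nat.one_le_div_iff h2t).mpr h2tn
  obtain ⟨q, hqo, hqm, hmq⟩ : ∃ q : ℕ, Odd q ∧ q ≤ n / 2 ^ t ∧ n / 2 ^ t ≤ q + 1 := by
    rcases Nat.even_or_odd (n / 2 ^ t) with h | h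
    · refine ⟨n / 2 ^ t - 1, ?_, by omega, by omega⟩
      exact Nat.Even.sub_odd hm1 h odd_one
    · exact ⟨_, h, le_rfl, by omega⟩
  have hq0 : 0 < q := hqo.pos
  have hle : 2 ^ t * q ≤ n := by
    calc 2 ^ t * q ≤ 2 ^ t * (n / 2 ^ t) := Nat.mul_le_mul_left _ hqm
      _ ≤ n := Nat.mul_div_le _ _
  have hlt : n < 2 ^ t * (q + 2) := by
    calc n < 2 ^ t * (n / 2 ^ t + 1) := Nat.lt_mul_div_succ n h2t
      _ ≤ 2 ^ t * (q + 2) := Nat.mul_le_mul_left _ (by omega)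
  have hleR : (2 : ℝ) ^ t * q ≤ n := by exact_mod_cast hle
  have hltR : (n : ℝ) < (2 : ℝ) ^ t * (q + 2) := by exact_mod_cast hlt
  have hq1R : (1 : ℝ) ≤ q := by exact_mod_cast hq0
  have hP : (0 : ℝ) < (2 : ℝ) ^ t := by positivity
  refine ⟨2 ^ t * q, hyp q hqo hq0 t ?_, hle, ?_⟩
  · have hq : Real.logb 2 q ≤ L - t := by
      rw [Real.logb_le_iff_le_rpow (by norm_num) (by linarith),
        Real.rpow_sub (by norm_num), ← hnL, Real.rpow_natCast, le_div_iff₀ hP]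
      linarith
    rw [hx, div_le_iff₀ hα1] at hxt
    nlinarith
  · push_cast
    obtain ⟨h, hh⟩ : ∃ h : ℝ, h = (2 : ℝ) ^ t * q := ⟨_, rfl⟩
    obtain ⟨a, ha⟩ : ∃ a : ℝ, a = α / (1 + α) := ⟨_, rfl⟩
    rw [← hh, ← ha]
    have ha0 : 0 ≤ a := by rw [ha]; positivity
    have ha1 : a ≤ 1 := by rw [ha, div_le_one hα1]; linarith
    have hPh : (2 : ℝ) ^ t ≤ h := by rw [hh]; nlinarith
    have hn3 : (n : ℝ) ≤ 3 * h := by rw [hh] at *; nlinarith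
    have hgap : (n : ℝ) - h < 2 * 2 ^ t := by rw [hh]; linarith
    have hh0 : 0 < h := by linarith
    have hna : (n : ℝ) ^ a ≤ 3 * h ^ a := by
      calc (n : ℝ) ^ a ≤ (3 * h) ^ a := Real.rpow_le_rpow hnpos.le hn3 ha0
        _ = 3 ^ a * h ^ a := Real.mul_rpow (by norm_num) hh0.le
        _ ≤ 3 * h ^ a := by
          gcongr
          calc (3 : ℝ) ^ a ≤ 3 ^ (1 : ℝ) :=
                Real.rpow_le_rpow_of_exponent_le (by norm_num) ha1
            _ = 3 := Real.rpow_one 3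
    have hxb : x ≤ L * a + β := by
      have e : x = L * a + β / (1 + α) := by rw [hx, ha]; ring
      have : β / (1 + α) ≤ β := div_le_self hβ.le (by linarith)
      linarith
    have hPb : (2 : ℝ) ^ t ≤ 2 * ((2 : ℝ) ^ β * (n : ℝ) ^ a) := by
      calc (2 : ℝ) ^ t = (2 : ℝ) ^ (t : ℝ) := (Real.rpow_natCast _ _).symm
        _ ≤ (2 : ℝ) ^ (1 + (β + L * a)) :=
          Real.rpow_le_rpow_of_exponent_le (by norm_num) (by linarith)
        _ = 2 * ((2 : ℝ) ^ β * (n : ℝ) ^ a) := by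
          rw [Real.rpow_add (by norm_num), Real.rpow_add (by norm_num), Real.rpow_one,
            Real.rpow_mul (by norm_num), ← hnL]
    have hb : (0 : ℝ) < (2 : ℝ) ^ β := by positivity
    have := mul_le_mul_of_nonneg_left hna hb.le
    linarith
end

section
/- Let d ≥ 1 and let M = I − E be a real d×d matrix such that |e_{ij}| ≤ ε for all i ≠ j and e_{ii} ≤ δ for 1 ≤ i ≤ d, where δ ≥ 0, ε ≥ 0, and δ + (d−1)ε ≤ 1. Then det(M) ≥ (1 − δ − (d−1)ε)·(1 − δ + ε)^{d−1}. -/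
open Matrix

theorem det_schur_aux (n : ℕ) (M : Matrix (Fin (n+1)) (Fin (n+1)) ℝ) (h : M 0 0 ≠ 0) :
    M.det = M 0 0 * (Matrix.of fun i j : Fin n =>
      M i.succ j.succ - M i.succ 0 * M 0 j.succ / M 0 0).det := by
  let c : Fin (n+1) → ℝ := Fin.cons 0 (fun i => M i.succ 0 / M 0 0)
  let B : Matrix (Fin (n+1)) (Fin (n+1)) ℝ := Matrix.of fun i j => M i j - c i * M 0 j
  have hc0 : c 0 = 0 := rfl
  have hcs : ∀ i : Fin n, c i.succ = M i.succ 0 / M 0 0 := fun i => rfl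
  have hB : M.det = B.det := by
    apply Matrix.det_eq_of_forall_row_eq_smul_add_const c 0 hc0
    intro i j
    simp [B, hc0]
  rw [hB, Matrix.det_succ_column_zero, Fin.sum_univ_succ, Finset.sum_eq_zero]
  · have e : B.submatrix (Fin.succAbove 0) Fin.succ = (Matrix.of fun i j : Fin n =>
      M i.succ j.succ - M i.succ 0 * M 0 j.succ / M 0 0) := by
      ext i j
      simp [B, hcs]
      ring
    rw [e]
    simp [B, hc0]
  · intro i _
    have : B i.succ 0 = 0 := by
      simp [B, hcs, h]
    simp [this]

theorem det_bound_aux (n : ℕ) : ∀ (M : Matrix (Fin (n+1)) (Fin (n+1)) ℝ) (a ε : ℝ),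
    0 ≤ a → 0 ≤ ε → (∀ i j, i ≠ j → |M i j| ≤ ε) → (∀ i, a ≤ M i i) → n * ε ≤ a →
    (a - n * ε) * (a + ε) ^ n ≤ M.det := by
  induction n with
  | zero =>
    intro M a ε _ _ _ hd _
    simpa using hd 0
  | succ n ih =>
    intro M a ε ha hε hoff hd hs
    push_cast at hs ⊢
    rcases ha.eq_or_lt with ha | ha
    · subst ha
      have hn : (0:ℝ) ≤ n := Nat.cast_nonneg n
      have h0 : ε = 0 := by nlinarith
      subst h0
      have hM : M = Matrix.diagonal (fun i => M i i) := by
        ext i j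
        by_cases hij : i = j
        · subst hij; simp
        · rw [Matrix.diagonal_apply_ne _ hij]
          exact abs_nonpos_iff.mp (hoff i j hij)
      rw [hM, Matrix.det_diagonal]
      simp
      exact Finset.prod_nonneg fun i _ => hd i
    · have hm : a ≤ M 0 0 := hd 0
      have hm0 : 0 < M 0 0 := ha.trans_le hm
      rw [det_schur_aux _ M hm0.ne']
      have key : ∀ i j : Fin (n+1), |M i.succ 0 * M 0 j.succ / M 0 0| ≤ ε * ε / a := by
        intro i j
        rw [abs_div, abs_mul, abs_of_pos hm0]
        have h1 := hoff i.succ 0 (Fin.succ_ne_zero i)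
        have h2 := hoff 0 j.succ (Fin.succ_ne_zero j).symm
        gcongr
      have e2 : a - ε * ε / a - n * (ε + ε * ε / a) = (a + ε) / a * (a - (n + 1) * ε) := by
        field_simp
        ring
      have hp : 0 ≤ (a + ε) / a * (a - (n + 1) * ε) :=
        mul_nonneg (by positivity) (by linarith)
      have hq : (0:ℝ) ≤ n * (ε + ε * ε / a) := by positivity
      have := ih (Matrix.of fun i j : Fin (n+1) =>
        M i.succ j.succ - M i.succ 0 * M 0 j.succ / M 0 0) (a - ε * ε / a) (ε + ε * ε / a)
        (by linarith) (by positivity)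
        (by
          intro i j hij
          have h1 := hoff i.succ j.succ (fun h => hij (Fin.succ_injective _ h))
          exact (abs_sub _ _).trans (add_le_add h1 (key i j)))
        (by
          intro i
          have h1 := hd i.succ
          have h2 := (abs_le.mp (key i i)).2
          simp only [Matrix.of_apply]
          linarith)
        (by linarith)
      rw [e2, show a - ε * ε / a + (ε + ε * ε / a) = a + ε by ring] at this
      have hL : 0 ≤ (a + ε) / a * (a - (n + 1) * ε) * (a + ε) ^ n :=
        mul_nonneg hp (by positivity)
      calc (a - (n + 1) * ε) * (a + ε) ^ (n + 1)
          = a * ((a + ε) / a * (a - (n + 1) * ε) * (a + ε) ^ n) := by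
            field_simp
            ring
        _ ≤ _ := mul_le_mul hm this hL hm0.le

/-- Let `d ≥ 1` and `M = I − E` a real `d × d` matrix with `|e_{ij}| ≤ ε` for
all `i ≠ j` and `e_{ii} ≤ δ` for all `i`, where `δ ≥ 0`, `ε ≥ 0` and
`δ + (d−1)ε ≤ 1`.  Then `det M ≥ (1 − δ − (d−1)ε)(1 − δ + ε)^{d−1}`. -/
theorem det_diagonally_dominant_lower_bound (d : ℕ) (hd : 1 ≤ d)
    (E : Matrix (Fin d) (Fin d) ℝ) (δ ε : ℝ)
    (hδ : 0 ≤ δ) (hε : 0 ≤ ε)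
    (hoff : ∀ i j, i ≠ j → |E i j| ≤ ε)
    (hdiag : ∀ i, E i i ≤ δ)
    (hsum : δ + ((d : ℝ) - 1) * ε ≤ 1) :
    (1 - E).det ≥ (1 - δ - ((d : ℝ) - 1) * ε) * (1 - δ + ε) ^ (d - 1) := by
  obtain ⟨n, rfl⟩ : ∃ n, d = n + 1 := ⟨d - 1, by omega⟩
  have hc : (((n + 1 : ℕ) : ℝ) - 1) = n := by push_cast; ring
  rw [hc] at hsum ⊢
  have hn : (0:ℝ) ≤ n * ε := by positivity
  refine det_bound_aux n (1 - E) (1 - δ) ε (by linarith) hε ?_ ?_ (by linarith)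
  · intro i j hij
    simpa [Matrix.sub_apply, Matrix.one_apply_ne hij] using hoff i j hij
  · intro i
    have := hdiag i
    simp only [Matrix.sub_apply, Matrix.one_apply_eq]
    linarith
end

section
/- Let d ≥ 1 and let M = I − E be a real d×d matrix such that |e_{ij}| ≤ ε for all 1 ≤ i, j ≤ d, where d·ε ≤ 1. Then det(M) ≥ 1 − d·ε. -/
open Matrix

theorem det_aux_bound (d : ℕ) : ∀ (E : Matrix (Fin d) (Fin d) ℝ) (ε : ℝ)
    (_ : ∀ i j, |E i j| ≤ ε) (_ : (d : ℝ) * ε ≤ 1),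
    (1 - E).det ≥ 1 - (d : ℝ) * ε := by
  induction d with
  | zero => intro E ε _ _; simp
  | succ n ih =>
    intro E ε hE hs
    have h00 := abs_le.1 (hE 0 0)
    have hε : 0 ≤ ε := (abs_nonneg _).trans (hE 0 0)
    push_cast at hs ⊢
    rcases Nat.eq_zero_or_pos n with rfl | hn
    · rw [det_fin_one]
      simp
      linarith
    have hn' : (1 : ℝ) ≤ n := by exact_mod_cast hn
    have hlt : ε < 1 := by nlinarith
    have h1 : 0 < 1 - ε := by linarith
    have ha : 0 < 1 - E 0 0 := by linarith
    let F : Matrix (Fin n) (Fin n) ℝ :=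
      Matrix.of fun i j => E i.succ j.succ + E i.succ 0 * E 0 j.succ / (1 - E 0 0)
    let c : Fin (n+1) → ℝ := Fin.cons 0 fun i => - E i.succ 0 / (1 - E 0 0)
    let B : Matrix (Fin (n+1)) (Fin (n+1)) ℝ :=
      Matrix.of fun i j => (1 - E) i j - c i * (1 - E) 0 j
    have hdet : (1 - E).det = (1 - E 0 0) * (1 - F).det := by
      have e1 : (1 - E).det = B.det := by
        apply det_eq_of_forall_row_eq_smul_add_const c 0 (by simp [c])
        intro i j
        simp [B, c]
      rw [e1, det_succ_column_zero, Fin.sum_univ_succ]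
      have hz : ∀ i : Fin n, B i.succ 0 = 0 := by
        intro i
        simp [B, c]
        field_simp
        ring
      have hsub : B.submatrix (Fin.succAbove 0) Fin.succ = 1 - F := by
        ext i j
        simp [B, c, F, Matrix.one_apply, (Fin.succ_ne_zero j).symm]
        ring
      rw [hsub]
      simp [hz]
      left
      simp [B, c]
    have hF : ∀ i j, |F i j| ≤ ε / (1 - ε) := by
      intro i j
      have h2 : |E i.succ 0 * E 0 j.succ / (1 - E 0 0)| ≤ ε * ε / (1 - ε) := by
        rw [abs_div, abs_mul, abs_of_pos ha]
        have := hE i.succ 0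
        have := hE 0 j.succ
        gcongr
        linarith
      calc |F i j| ≤ |E i.succ j.succ| + |E i.succ 0 * E 0 j.succ / (1 - E 0 0)| := abs_add_le _ _
        _ ≤ ε + ε * ε / (1 - ε) := add_le_add (hE _ _) h2
        _ = ε / (1 - ε) := by field_simp; ring
    have hs' : (n : ℝ) * (ε / (1 - ε)) ≤ 1 := by
      rw [← mul_div_assoc, div_le_one h1]; linarith
    have h := ih F _ hF hs'
    have key : (1 - ε) * (1 - (n : ℝ) * (ε / (1 - ε))) = 1 - (n + 1) * ε := by
      field_simp; ring
    rw [hdet, ← key]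
    apply mul_le_mul _ h (by linarith) ha.le
    linarith

/-- Let `d ≥ 1` and `M = I − E` a real `d × d` matrix with `|e_{ij}| ≤ ε` for
all `i, j`, where `d ε ≤ 1`.  Then `det M ≥ 1 − d ε`. -/
theorem det_perturbed_identity_lower_bound (d : ℕ) (hd : 1 ≤ d)
    (E : Matrix (Fin d) (Fin d) ℝ) (ε : ℝ)
    (hE : ∀ i j, |E i j| ≤ ε)
    (hsum : (d : ℝ) * ε ≤ 1) :
    (1 - E).det ≥ 1 - (d : ℝ) * ε := by
  exact det_aux_bound d E ε hE hsum
end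

section
/- If n = h + d where h and d are positive integers (so n > h > 0), then (h/n)^n > exp(−d − d²/h). -/
/-- If `n = h + d` where `h` and `d` are positive integers, then
`(h/n)^n > exp(−d − d²/h)`. -/
theorem hn_pow_gt_exp (h d n : ℕ) (hh : 0 < h) (hd : 0 < d) (hn : n = h + d) :
    ((h : ℝ) / (n : ℝ)) ^ n > Real.exp (-(d : ℝ) - (d : ℝ) ^ 2 / (h : ℝ)) := by
  have hh' : (0 : ℝ) < h := by exact_mod_cast hh
  have hd' : (0 : ℝ) < d := by exact_mod_cast hd
  have hn' : (n : ℝ) = h + d := by exact_mod_cast hn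
  have hn0 : n ≠ 0 := by omega
  have e : -(d : ℝ) - (d : ℝ) ^ 2 / (h : ℝ) = n * (-((d : ℝ) / h)) := by
    rw [hn']; field_simp; ring
  rw [e, Real.exp_nat_mul]
  refine pow_lt_pow_left₀ ?_ (Real.exp_pos _).le hn0
  have key : (d : ℝ) / h + 1 < Real.exp ((d : ℝ) / h) :=
    Real.add_one_lt_exp (div_pos hd' hh').ne'
  have e2 : (h : ℝ) / n = ((d : ℝ) / h + 1)⁻¹ := by
    rw [hn']; field_simp; ring
  rw [e2, Real.exp_neg]
  exact inv_strictAnti₀ (by positivity) key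
end
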